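/- arXiv:2109.07845 — 2 statements merged into one kernel-verified Lean document; each statement's English description precedes it below -/
import Mathlib

section
/- With the bracket setup below, assume the reversal identity [a_1,…,a_m] = ε·[a_m,…,a_1] for all indices, where ε = +1 if m ≡ 0,1 (mod 4) and ε = −1 if m ≡ 2,3 (mod 4). Define [[a_1,…,a_m]] := Σ_{k=1}^{m} [a_{σ^{2k}(1)}, …, a_{σ^{2k}(m)}] where σ = (1 2 ⋯ m) ∈ S_m, and for 1 ≤ j ≤ n−1 set Ω_j := (−1)^j · [[1, 2, …, ĵ, …, n−1]] (the hat denoting omission of j). Let g = (g_{ij}) ∈ GL_{n−1}(K) and set x'_j := Σ_{i=1}^{n−1} g_{ij}·x_i. Define φ'_r(x_1,…,x_{n−1}) := φ_r(x'_1,…,x'_{n−1}) for 1 ≤ r ≤ m, and let Ω'_1,…,Ω'_{n−1} be the quadratic forms obtained from φ'_1,…,φ'_m by the same construction. Then for every 1 ≤ j ≤ n−1: Ω'_j(x_1,…,x_{n−1}) = det(g) · Σ_{k=1}^{n−1} (g^{−1})_{kj} · Ω_k(x'_1,…,x'_{n−1}). Equivalently, Σ_j x_j* ⊗ Ω'_j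 = det(g)·(g · Σ_j x_j* ⊗ Ω_j) under the standard action of GL_{n−1} on V* ⊗ S²V, where V = ⟨x_1,…,x_{n−1}⟩. -/
open MvPolynomial

/-- The row vector `(∂φ_1/∂x_{a_1})(∂φ_2/∂x_{a_2})⋯(∂φ_r/∂x_{a_r})` (0-based indexing). -/
noncomputable def brkVec {K : Type*} [Field K] {N : ℕ} {b : ℕ → ℕ}
    (φ : ∀ r : ℕ, Matrix (Fin (b r)) (Fin (b (r + 1))) (MvPolynomial (Fin N) K))
    (a : ℕ → Fin N) : ∀ r : ℕ, Fin (b r) → MvPolynomial (Fin N) K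
  | 0 => fun _ => 1
  | (r + 1) => Matrix.vecMul (brkVec φ a r) (fun p q => pderiv (a r) (φ r p q))

/-- The bracket `[a_1, …, a_m]`, a `1 × 1` matrix (since `b m = 1`) identified with a
polynomial via the sum of its entries. -/
noncomputable def brk {K : Type*} [Field K] {N : ℕ} {b : ℕ → ℕ}
    (φ : ∀ r : ℕ, Matrix (Fin (b r)) (Fin (b (r + 1))) (MvPolynomial (Fin N) K))
    (m : ℕ) (a : ℕ → Fin N) : MvPolynomial (Fin N) K :=
  ∑ j : Fin (b m), brkVec φ a m j

/-- The double bracket `[[a_1, …, a_m]] = Σ_{k=1}^{m} [a_{σ^{2k}(1)}, …, a_{σ^{2k}(m)}]`,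
where `σ = (1 2 ⋯ m)`. -/
noncomputable def dbrk {K : Type*} [Field K] {N : ℕ} {b : ℕ → ℕ}
    (φ : ∀ r : ℕ, Matrix (Fin (b r)) (Fin (b (r + 1))) (MvPolynomial (Fin N) K))
    (m : ℕ) (a : ℕ → Fin N) : MvPolynomial (Fin N) K :=
  ∑ k ∈ Finset.range m, brk φ m (fun r => a ((r + 2 * (k + 1)) % m))

/-- The 0-based sequence `1, 2, …, ĵ, …, n−1` (omission of `j`): position `r` holds `r`
for `r < j`, and `r + 1` for `j ≤ r < N − 1` (junk value `j` beyond). -/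
def omitIdx {N : ℕ} (j : Fin N) : ℕ → Fin N := fun r =>
  if h : r < (j : ℕ) then ⟨r, lt_trans h j.isLt⟩
  else if h2 : r + 1 < N then ⟨r + 1, h2⟩ else j

/-- The quadratic form `Ω_j = (−1)^j·[[1, 2, …, ĵ, …, n−1]]` (0-based `j`, whence the
exponent `j + 1`). -/
noncomputable def OmegaForm {K : Type*} [Field K] {N : ℕ} {b : ℕ → ℕ}
    (φ : ∀ r : ℕ, Matrix (Fin (b r)) (Fin (b (r + 1))) (MvPolynomial (Fin N) K))
    (m : ℕ) (j : Fin N) : MvPolynomial (Fin N) K :=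
  (-1 : MvPolynomial (Fin N) K) ^ ((j : ℕ) + 1) * dbrk φ m (omitIdx j)

section PartA

variable {K : Type*} [Field K] {N : ℕ}

/-- Taylor expansion in the direction `x_i`. -/
noncomputable def tay (i : Fin N) :
    MvPolynomial (Fin N) K →ₐ[K] Polynomial (MvPolynomial (Fin N) K) :=
  aeval (fun j => Polynomial.C (X j) + (if j = i then Polynomial.X else 0))

/-- Second Hasse derivative in the direction `x_i`. -/
noncomputable def has2 (i : Fin N) (F : MvPolynomial (Fin N) K) : MvPolynomial (Fin N) K :=
  (tay i F).coeff 2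

lemma tay_X (i j : Fin N) : tay (K := K) i (X j)
    = Polynomial.C (X j) + (if j = i then Polynomial.X else 0) := by
  simp [tay]

lemma tay_C (i : Fin N) (c : K) : tay (K := K) i (C c) = Polynomial.C (C c) := by
  rw [← MvPolynomial.algebraMap_eq, AlgHom.commutes]; rfl

lemma tay_coeff_zero (i : Fin N) (F : MvPolynomial (Fin N) K) : (tay i F).coeff 0 = F := by
  induction F using MvPolynomial.induction_on with
  | C c => simp [tay_C]
  | add p q hp hq => simp [hp, hq]
  | mul_X p j hp =>
    rw [map_mul, Polynomial.mul_coeff_zero, hp, tay_X]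
    split_ifs <;> simp

lemma tay_coeff_one (i : Fin N) (F : MvPolynomial (Fin N) K) :
    (tay i F).coeff 1 = pderiv i F := by
  induction F using MvPolynomial.induction_on with
  | C c => simp [tay_C, Polynomial.coeff_C]
  | add p q hp hq => simp [hp, hq]
  | mul_X p j hp =>
    rw [map_mul, Polynomial.mul_coeff_one, hp, tay_coeff_zero, tay_coeff_zero, tay_X, pderiv_mul,
      pderiv_X, Pi.single_apply]
    split_ifs <;> simp [Polynomial.coeff_C] <;> ring

lemma has2_mul (i : Fin N) (F G : MvPolynomial (Fin N) K) :
    has2 i (F * G) = F * has2 i G + pderiv i F * pderiv i G + has2 i F * G := by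
  unfold has2
  rw [map_mul, Polynomial.coeff_mul, Finset.Nat.sum_antidiagonal_eq_sum_range_succ_mk]
  simp [Finset.sum_range_succ, tay_coeff_zero, tay_coeff_one]

lemma has2_add (i : Fin N) (F G : MvPolynomial (Fin N) K) :
    has2 i (F + G) = has2 i F + has2 i G := by simp [has2]

lemma has2_zero (i : Fin N) : has2 (K := K) i 0 = 0 := by simp [has2]

lemma has2_sum {ι : Type*} (s : Finset ι) (i : Fin N) (F : ι → MvPolynomial (Fin N) K) :
    has2 i (∑ q ∈ s, F q) = ∑ q ∈ s, has2 i (F q) := by simp [has2]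

lemma has2_smul (i : Fin N) (c : K) (F : MvPolynomial (Fin N) K) :
    has2 i (c • F) = c • has2 i F := by simp [has2]

lemma hom1_span {G : MvPolynomial (Fin N) K} (h : G.IsHomogeneous 1) :
    G ∈ Submodule.span K (Set.range (X : Fin N → MvPolynomial (Fin N) K)) := by
  rw [← homogeneousSubmodule_one_eq_span_X]; exact h

lemma has2_lin (i : Fin N) {G : MvPolynomial (Fin N) K} (h : G.IsHomogeneous 1) :
    has2 i G = 0 := by
  have h0 := hom1_span h
  clear h
  induction h0 using Submodule.span_induction with
  | mem x hx =>
    obtain ⟨j, rfl⟩ := hx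
    rw [has2, tay_X]
    split_ifs <;> simp [Polynomial.coeff_C, Polynomial.coeff_X]
  | zero => exact has2_zero i
  | add x y _ _ hx hy =>
    rw [has2_add, hx, hy, add_zero]
  | smul c x _ hx => rw [has2_smul, hx, smul_zero]

lemma pderiv_comm2 (i j : Fin N) (F : MvPolynomial (Fin N) K) :
    pderiv i (pderiv j F) = pderiv j (pderiv i F) := by
  induction F using MvPolynomial.induction_on with
  | C c => simp
  | add p q hp hq => simp [hp, hq]
  | mul_X p k hp =>
    simp only [pderiv_mul, map_add, hp, pderiv_X, Pi.single_apply]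
    split_ifs <;> simp <;> ring

lemma pd_hom0 (i : Fin N) {G : MvPolynomial (Fin N) K} (h : G.IsHomogeneous 0) :
    pderiv i G = 0 := by
  have := (totalDegree_zero_iff_isHomogeneous _).2 h
  rw [totalDegree_eq_zero_iff_eq_C] at this
  rw [this, pderiv_C]

lemma pd_lin (i j : Fin N) {G : MvPolynomial (Fin N) K} (h : G.IsHomogeneous 1) :
    pderiv i (pderiv j G) = 0 := pd_hom0 i h.pderiv

lemma pd_has2 (i j : Fin N) {G : MvPolynomial (Fin N) K} (h : G.IsHomogeneous 2) :
    pderiv j (has2 i G) = 0 := by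
  have h' : G ∈ homogeneousSubmodule (Fin N) K 1 * homogeneousSubmodule (Fin N) K 1 := by
    rw [← pow_two, homogeneousSubmodule_one_pow]; exact h
  induction h' using Submodule.mul_induction_on' with
  | mem_mul_mem a ha b hb =>
    rw [mem_homogeneousSubmodule] at ha hb
    rw [has2_mul, has2_lin i ha, has2_lin i hb]
    simp [pderiv_mul, pd_lin _ _ ha, pd_lin _ _ hb]
  | add x hx y hy h1 h2 =>
    have e : homogeneousSubmodule (Fin N) K 1 * homogeneousSubmodule (Fin N) K 1 =
        homogeneousSubmodule (Fin N) K 2 := by rw [← pow_two, homogeneousSubmodule_one_pow]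
    rw [e] at hx hy
    rw [has2_add, map_add, h1 hx, h2 hy, add_zero]

variable {p q r : ℕ}

abbrev PM (K : Type*) [Field K] (N p q : ℕ) := Matrix (Fin p) (Fin q) (MvPolynomial (Fin N) K)

/-- push rule -/
lemma rule_push (c : Fin N) (A : PM K N p q) (B : PM K N q r) (h : A * B = 0) :
    A.map id * B.map (pderiv c) + A.map (pderiv c) * B.map id = 0 := by
  ext1 s t
  have := congrArg (pderiv c) (congrFun (congrFun h s) t)
  simp only [Matrix.mul_apply, map_sum, pderiv_mul, Matrix.zero_apply, map_zero] at this
  simp only [Matrix.add_apply, Matrix.mul_apply, Matrix.map_apply, Matrix.zero_apply, id,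
    ← Finset.sum_add_distrib]
  rw [← this]
  exact Finset.sum_congr rfl fun _ _ => by ring

/-- left end rule; `B` linear -/
lemma rule_left (i j : Fin N) (A : PM K N p q) (B : PM K N q r) (h : A * B = 0)
    (hB : ∀ s t, (B s t).IsHomogeneous 1) :
    A.map (pderiv i) * B.map (pderiv j) + A.map (pderiv j) * B.map (pderiv i)
      + A.map (fun F => pderiv i (pderiv j F)) * B.map id = 0 := by
  ext1 s t
  have := congrArg (fun F => pderiv i (pderiv j F)) (congrFun (congrFun h s) t)
  simp only [Matrix.mul_apply, map_sum, pderiv_mul, Matrix.zero_apply, map_zero, map_add,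
    pd_lin _ _ (hB _ _)] at this
  simp only [Matrix.add_apply, Matrix.mul_apply, Matrix.map_apply, Matrix.zero_apply, id,
    ← Finset.sum_add_distrib]
  rw [← this]
  exact Finset.sum_congr rfl fun _ _ => by ring

lemma rule_mid (i j : Fin N) (A : PM K N p q) (B : PM K N q r) (h : A * B = 0)
    (hA : ∀ s t, (A s t).IsHomogeneous 1) (hB : ∀ s t, (B s t).IsHomogeneous 1) :
    A.map (pderiv i) * B.map (pderiv j) + A.map (pderiv j) * B.map (pderiv i) = 0 := by
  have := rule_left i j A B h hB
  have e : A.map (fun F => pderiv i (pderiv j F)) = 0 := by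
    ext1 s t; simp [pd_lin _ _ (hA _ _)]
  rwa [e, Matrix.zero_mul, add_zero] at this

lemma rule_left2 (i : Fin N) (A : PM K N p q) (B : PM K N q r) (h : A * B = 0)
    (hB : ∀ s t, (B s t).IsHomogeneous 1) :
    A.map (pderiv i) * B.map (pderiv i) + A.map (has2 i) * B.map id = 0 := by
  ext1 s t
  have := congrArg (has2 i) (congrFun (congrFun h s) t)
  simp only [Matrix.mul_apply, has2_sum, has2_mul, Matrix.zero_apply, has2_zero,
    has2_lin _ (hB _ _), mul_zero, zero_add] at this
  simp only [Matrix.add_apply, Matrix.mul_apply, Matrix.map_apply, Matrix.zero_apply, id,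
    ← Finset.sum_add_distrib]
  exact this

lemma rule_mid2 (i : Fin N) (A : PM K N p q) (B : PM K N q r) (h : A * B = 0)
    (hA : ∀ s t, (A s t).IsHomogeneous 1) (hB : ∀ s t, (B s t).IsHomogeneous 1) :
    A.map (pderiv i) * B.map (pderiv i) = 0 := by
  have := rule_left2 i A B h hB
  have e : A.map (has2 i) = 0 := by
    ext1 s t; simp [has2_lin _ (hA _ _)]
  rwa [e, Matrix.zero_mul, add_zero] at this

lemma rule_left3 (i c : Fin N) (A : PM K N p q) (B : PM K N q r) (h : A * B = 0)
    (hA : ∀ s t, (A s t).IsHomogeneous 2) (hB : ∀ s t, (B s t).IsHomogeneous 1) :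
    A.map (fun F => pderiv i (pderiv c F)) * B.map (pderiv i)
      + A.map (has2 i) * B.map (pderiv c) = 0 := by
  ext1 s t
  have := congrArg (pderiv c) (congrFun (congrFun (rule_left2 i A B h hB) s) t)
  simp only [Matrix.add_apply, Matrix.mul_apply, Matrix.map_apply, Matrix.zero_apply, id,
    map_add, map_sum, pderiv_mul, map_zero, pd_lin _ _ (hB _ _), pd_has2 _ _ (hA _ _), mul_zero,
    zero_mul, zero_add, add_zero] at this
  simp only [Matrix.add_apply, Matrix.mul_apply, Matrix.map_apply, Matrix.zero_apply]
  rw [← this]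
  simp only [pderiv_comm2 i c]

end PartA

section PartB

lemma sgn_move {X A : Type*} [AddCommGroup A] (v : List X) : ∀ (F : List X → A) (p : X)
    (_ : ∀ u p q w, u.length + 2 + w.length = v.length + 1 →
      F (u ++ p :: q :: w) + F (u ++ q :: p :: w) = 0),
    F (v ++ [p]) = (-1 : ℤ) ^ v.length • F (p :: v) := by
  induction v with
  | nil => intro F p _; simp
  | cons x v ih =>
    intro F p h
    have h1 := ih (fun l => F (x :: l)) p (fun u p q w hl => h (x :: u) p q w (by
      simp only [List.length_cons]; omega))
    have h2 := h [] x p v (by simp only [List.length_cons, List.length_nil]; omega)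
    simp only [List.nil_append] at h2
    simp only [List.cons_append, List.length_cons]
    rw [h1, eq_neg_of_add_eq_zero_left h2, pow_succ]
    simp

lemma sgn_rev {X A : Type*} [AddCommGroup A] (v : List X) : ∀ (F : List X → A)
    (_ : ∀ u p q w, u.length + 2 + w.length = v.length →
      F (u ++ p :: q :: w) + F (u ++ q :: p :: w) = 0),
    F v.reverse = (-1 : ℤ) ^ (v.length.choose 2) • F v := by
  induction v with
  | nil => intro F _; simp
  | cons x v ih =>
    intro F h
    have h1 := ih (fun l => F (x :: l)) (fun u p q w hl => h (x :: u) p q w (by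
      simp only [List.length_cons]; omega))
    have h2 := sgn_move v.reverse F x (fun u p q w hl => h u p q w (by
      simp only [List.length_cons, List.length_reverse] at *; omega))
    rw [List.reverse_cons, h2, h1, smul_smul, List.length_reverse, ← pow_add, List.length_cons,
      Nat.choose_succ_succ' _ 1, Nat.choose_one_right]

lemma eps_sign (k : ℕ) : ((if k % 4 = 0 ∨ k % 4 = 1 then 1 else -1 : ℤ)) = (-1) ^ (k.choose 2) := by
  induction k using Nat.twoStepInduction with
  | zero => simp
  | one => simp
  | more k ih _ =>
    have e : (k + 2).choose 2 = k.choose 2 + 2 * k + 1 := by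
      rw [Nat.choose_succ_succ' (k+1) 1, Nat.choose_succ_succ' k 1]; simp; ring
    rw [e, pow_succ, pow_add, ← ih, pow_mul]
    have : k % 4 < 4 := Nat.mod_lt _ (by norm_num)
    split_ifs <;> first | omega | simp

lemma eps_mul (k : ℕ) :
    ((if (k + 2) % 4 = 0 ∨ (k + 2) % 4 = 1 then 1 else -1 : ℤ)) * (-1) ^ (k.choose 2) = -1 := by
  rw [eps_sign]
  have e : (k + 2).choose 2 = k.choose 2 + 2 * k + 1 := by
    rw [Nat.choose_succ_succ' (k+1) 1, Nat.choose_succ_succ' k 1]; simp; ring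
  rw [e, ← pow_add, show k.choose 2 + 2 * k + 1 + k.choose 2 = 2 * (k.choose 2 + k) + 1 by ring,
    pow_succ, pow_mul]
  simp

variable {K : Type*} [Field K] {N : ℕ} {b : ℕ → ℕ}

abbrev Op (K : Type*) [Field K] (N : ℕ) := MvPolynomial (Fin N) K → MvPolynomial (Fin N) K

noncomputable def pv (M : ∀ r : ℕ, PM K N (b r) (b (r + 1))) :
    ∀ r : ℕ, Fin (b r) → MvPolynomial (Fin N) K
  | 0 => fun _ => 1
  | (r + 1) => Matrix.vecMul (pv M r) (M r)

lemma pv_congr (M M' : ∀ r : ℕ, PM K N (b r) (b (r + 1))) (s : ℕ) (h : ∀ r < s, M r = M' r) :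
    pv M s = pv M' s := by
  induction s with
  | zero => rfl
  | succ s ih => rw [pv, pv, ih (fun r hr => h r (by omega)), h s (by omega)]

lemma pv_three (M M' M'' : ∀ r : ℕ, PM K N (b r) (b (r + 1))) (s m : ℕ) (hs : s + 2 ≤ m)
    (h1 : ∀ r, r ≠ s → r ≠ s + 1 → M r = M' r) (h2 : ∀ r, r ≠ s → r ≠ s + 1 → M r = M'' r)
    (h : M s * M (s + 1) + M' s * M' (s + 1) + M'' s * M'' (s + 1) = 0) :
    pv M m + pv M' m + pv M'' m = 0 := by
  induction m, hs using Nat.le_induction with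
  | base =>
    simp only [pv]
    rw [← pv_congr M M' s (fun r hr => h1 r (by omega) (by omega)),
      ← pv_congr M M'' s (fun r hr => h2 r (by omega) (by omega))]
    simp only [Matrix.vecMul_vecMul]
    rw [← Matrix.vecMul_add, ← Matrix.vecMul_add, h, Matrix.vecMul_zero]
  | succ m hm ih =>
    simp only [pv]
    rw [← h1 m (by omega) (by omega), ← h2 m (by omega) (by omega), ← Matrix.add_vecMul,
      ← Matrix.add_vecMul, ih, Matrix.zero_vecMul]

noncomputable def EE (φ : ∀ r : ℕ, PM K N (b r) (b (r + 1))) (m : ℕ) (l : List (Op K N)) :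
    MvPolynomial (Fin N) K :=
  ∑ j, pv (fun r => (φ r).map (l.getD r id)) m j

lemma getD_ins {α : Type*} (u w : List α) (x y e : α) (r : ℕ) :
    (u ++ x :: y :: w).getD r e = if r = u.length then x else if r = u.length + 1 then y
      else (u ++ e :: e :: w).getD r e := by
  simp only [List.getD_eq_getElem?_getD]
  rcases lt_trichotomy r u.length with h | h | h
  · rw [if_neg (by omega), if_neg (by omega), List.getElem?_append_left h,
      List.getElem?_append_left h]
  · subst h; simp
  · rw [if_neg (by omega), List.getElem?_append_right (by omega),
      List.getElem?_append_right (by omega)]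
    obtain ⟨t, rfl⟩ := Nat.exists_eq_add_of_lt h
    rw [show u.length + t + 1 - u.length = t + 1 by omega]
    rcases t with _ | t
    · simp
    · simp [show ¬ (u.length + (t + 1) + 1 = u.length + 1) by omega]

lemma EE_three (φ : ∀ r : ℕ, PM K N (b r) (b (r + 1))) (m s : ℕ) (u w : List (Op K N))
    (hu : u.length = s) (hs : s + 2 ≤ m) (x y x1 y1 x2 y2 : Op K N)
    (h : (φ s).map x * (φ (s + 1)).map y + (φ s).map x1 * (φ (s + 1)).map y1
      + (φ s).map x2 * (φ (s + 1)).map y2 = 0) :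
    EE φ m (u ++ x :: y :: w) + EE φ m (u ++ x1 :: y1 :: w) + EE φ m (u ++ x2 :: y2 :: w) = 0 := by
  unfold EE
  rw [← Finset.sum_add_distrib, ← Finset.sum_add_distrib]
  subst hu
  have := pv_three (fun r => (φ r).map ((u ++ x :: y :: w).getD r id))
    (fun r => (φ r).map ((u ++ x1 :: y1 :: w).getD r id))
    (fun r => (φ r).map ((u ++ x2 :: y2 :: w).getD r id)) u.length m hs
    (fun r h1 h2 => by
      beta_reduce
      rw [getD_ins, if_neg h1, if_neg h2, getD_ins u w x1, if_neg h1, if_neg h2])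
    (fun r h1 h2 => by
      beta_reduce
      rw [getD_ins, if_neg h1, if_neg h2, getD_ins u w x2, if_neg h1, if_neg h2])
    (by
      have e1 : ∀ x y : Op K N, (u ++ x :: y :: w).getD u.length id = x := fun x y => by
        rw [getD_ins, if_pos rfl]
      have e2 : ∀ x y : Op K N, (u ++ x :: y :: w).getD (u.length + 1) id = y := fun x y => by
        rw [getD_ins, if_neg (by omega), if_pos rfl]
      beta_reduce
      rw [e1, e1, e1, e2, e2, e2]
      exact h)
  exact Finset.sum_eq_zero fun j _ => congrFun this j

lemma EE_zero (φ : ∀ r : ℕ, PM K N (b r) (b (r + 1))) (m s : ℕ) (hs : s < m) (l : List (Op K N))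
    (hl : l.getD s id = fun _ => 0) : EE φ m l = 0 := by
  have : pv (fun r => (φ r).map (l.getD r id)) m = 0 := by
    induction m, hs using Nat.le_induction with
    | base =>
      rw [Nat.succ_eq_add_one, pv, hl]
      have : (φ s).map (fun _ => (0 : MvPolynomial (Fin N) K)) = 0 := by ext1; simp
      rw [this, Matrix.vecMul_zero]
    | succ m hm ih => rw [pv, ih, Matrix.zero_vecMul]
  rw [EE, this]; simp

lemma EE_two (φ : ∀ r : ℕ, PM K N (b r) (b (r + 1))) (m s : ℕ) (u w : List (Op K N))
    (hu : u.length = s) (hs : s + 2 ≤ m) (x y x1 y1 : Op K N)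
    (h : (φ s).map x * (φ (s + 1)).map y + (φ s).map x1 * (φ (s + 1)).map y1 = 0) :
    EE φ m (u ++ x :: y :: w) + EE φ m (u ++ x1 :: y1 :: w) = 0 := by
  have e : (φ s).map (fun _ => (0 : MvPolynomial (Fin N) K)) = 0 := by ext1; simp
  have := EE_three φ m s u w hu hs x y x1 y1 (fun _ => 0) id (by rw [h, e]; simp)
  rwa [EE_zero φ m s (by omega) (u ++ (fun _ => 0) :: id :: w) (by rw [getD_ins, if_pos hu.symm]),
    add_zero] at this

lemma EE_one (φ : ∀ r : ℕ, PM K N (b r) (b (r + 1))) (m s : ℕ) (u w : List (Op K N))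
    (hu : u.length = s) (hs : s + 2 ≤ m) (x y : Op K N)
    (h : (φ s).map x * (φ (s + 1)).map y = 0) :
    EE φ m (u ++ x :: y :: w) = 0 := by
  have e : (φ s).map (fun _ => (0 : MvPolynomial (Fin N) K)) = 0 := by ext1; simp
  have := EE_two φ m s u w hu hs x y (fun _ => 0) id (by rw [h, e]; simp)
  rwa [EE_zero φ m s (by omega) (u ++ (fun _ => 0) :: id :: w) (by rw [getD_ins, if_pos hu.symm]),
    add_zero] at this

/-- the derivation operators of a list of indices -/
noncomputable def dl (l : List (Fin N)) : List (Op K N) := l.map (fun i => ⇑(pderiv i))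

@[simp] lemma dl_nil : dl (K := K) ([] : List (Fin N)) = [] := rfl
@[simp] lemma dl_cons (i : Fin N) (l : List (Fin N)) :
    dl (K := K) (i :: l) = ⇑(pderiv i) :: dl l := rfl
@[simp] lemma dl_append (l l' : List (Fin N)) :
    dl (K := K) (l ++ l') = dl l ++ dl l' := List.map_append
@[simp] lemma dl_length (l : List (Fin N)) : (dl (K := K) l).length = l.length := by simp [dl]

structure Cx (φ : ∀ r : ℕ, PM K N (b r) (b (r + 1))) (k : ℕ) (ε : ℤ) : Prop where
  hk : 1 ≤ k
  comp : ∀ r, r + 2 ≤ k + 2 → φ r * φ (r + 1) = 0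
  deg1 : ∀ p q, (φ 0 p q).IsHomogeneous 2
  mid : ∀ r, 1 ≤ r → r ≤ k → ∀ p q, (φ r p q).IsHomogeneous 1
  eps : ε * (-1) ^ (k.choose 2) = -1
  rev : ∀ l : List (Fin N), l.length = k + 2 →
    EE φ (k + 2) (dl l) = ε • EE φ (k + 2) (dl l.reverse)

namespace Cx

variable {φ : ∀ r : ℕ, PM K N (b r) (b (r + 1))} {k : ℕ} {ε : ℤ}

lemma push (H : Cx φ k ε) (u w : List (Op K N)) (hu : u.length ≤ k) (c : Fin N) :
    EE φ (k + 2) (u ++ id :: ⇑(pderiv c) :: w) + EE φ (k + 2) (u ++ ⇑(pderiv c) :: id :: w) = 0 :=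
  EE_two φ (k + 2) u.length u w rfl (by omega) _ _ _ _ (rule_push c _ _ (H.comp _ (by omega)))

lemma mids (H : Cx φ k ε) (u w : List (Op K N)) (hu : 1 ≤ u.length) (hu2 : u.length + 1 ≤ k) (i j : Fin N) :
    EE φ (k + 2) (u ++ ⇑(pderiv i) :: ⇑(pderiv j) :: w)
      + EE φ (k + 2) (u ++ ⇑(pderiv j) :: ⇑(pderiv i) :: w) = 0 :=
  EE_two φ (k + 2) u.length u w rfl (by omega) _ _ _ _ (rule_mid i j _ _ (H.comp _ (by omega))
    (H.mid _ hu (by omega)) (H.mid _ (by omega) hu2))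

lemma mids2 (H : Cx φ k ε) (u w : List (Op K N)) (hu : 1 ≤ u.length) (hu2 : u.length + 1 ≤ k) (i : Fin N) :
    EE φ (k + 2) (u ++ ⇑(pderiv i) :: ⇑(pderiv i) :: w) = 0 :=
  EE_one φ (k + 2) u.length u w rfl (by omega) _ _ (rule_mid2 i _ _ (H.comp _ (by omega))
    (H.mid _ hu (by omega)) (H.mid _ (by omega) hu2))

lemma left (H : Cx φ k ε) (w : List (Op K N)) (i j : Fin N) :
    EE φ (k + 2) (⇑(pderiv i) :: ⇑(pderiv j) :: w) + EE φ (k + 2) (⇑(pderiv j) :: ⇑(pderiv i) :: w)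
      + EE φ (k + 2) ((fun F => pderiv i (pderiv j F)) :: id :: w) = 0 :=
  EE_three φ (k + 2) 0 [] w rfl (by omega) _ _ _ _ _ _ (rule_left i j _ _ (H.comp _ (by omega))
    (H.mid _ le_rfl H.hk))

lemma left2 (H : Cx φ k ε) (w : List (Op K N)) (i : Fin N) :
    EE φ (k + 2) (⇑(pderiv i) :: ⇑(pderiv i) :: w) + EE φ (k + 2) (has2 i :: id :: w) = 0 :=
  EE_two φ (k + 2) 0 [] w rfl (by omega) _ _ _ _ (rule_left2 i _ _ (H.comp _ (by omega))
    (H.mid _ le_rfl H.hk))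

lemma left3 (H : Cx φ k ε) (w : List (Op K N)) (i c : Fin N) :
    EE φ (k + 2) ((fun F => pderiv i (pderiv c F)) :: ⇑(pderiv i) :: w)
      + EE φ (k + 2) (has2 i :: ⇑(pderiv c) :: w) = 0 :=
  EE_two φ (k + 2) 0 [] w rfl (by omega) _ _ _ _ (rule_left3 i c _ _ (H.comp _ (by omega))
    H.deg1 (H.mid _ le_rfl H.hk))

/-- push the identity from one end of a block to the other -/
lemma pushall (H : Cx φ k ε) (c : List (Fin N)) : ∀ (u : List (Op K N)), u.length + c.length ≤ k + 1 →
    EE φ (k + 2) (u ++ id :: dl c) = (-1 : ℤ) ^ c.length • EE φ (k + 2) (u ++ (dl c ++ [id])) := by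
  induction c with
  | nil => intro u _; simp
  | cons x c ih =>
    intro u hu
    simp only [List.length_cons] at hu
    have h1 := H.push u (dl c) (by omega) x
    have h2 := ih (u ++ [⇑(pderiv x)]) (by
      simp only [List.length_append, List.length_cons, List.length_nil]; omega)
    simp only [List.append_assoc, List.cons_append, List.nil_append] at h2
    rw [dl_cons, eq_neg_of_add_eq_zero_left h1, h2, List.length_cons, pow_succ]
    simp

/-- `c ↦ E (o, id, c)` is alternating -/
lemma altW (H : Cx φ k ε) (o : Op K N) (u : List (Fin N)) (p q : Fin N) (w : List (Fin N))
    (h : u.length + 2 + w.length = k) :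
    EE φ (k + 2) (o :: id :: dl (u ++ p :: q :: w))
      + EE φ (k + 2) (o :: id :: dl (u ++ q :: p :: w)) = 0 := by
  have h1 := H.pushall (u ++ p :: q :: w) [o] (by simp; omega)
  have h2 := H.pushall (u ++ q :: p :: w) [o] (by simp; omega)
  simp only [List.cons_append, List.nil_append] at h1 h2
  rw [h1, h2]
  have h3 := H.mids (o :: dl u) (dl w ++ [id]) (by simp) (by simp; omega) p q
  simp only [List.length_append, List.length_cons, ← smul_add, dl_append, dl_cons,
    List.append_assoc, List.cons_append, List.nil_append] at h3 ⊢
  rw [h3, smul_zero]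

/-- `c ↦ E (i, c, j)` is alternating -/
lemma altM (H : Cx φ k ε) (o o' : Op K N) (u : List (Fin N)) (p q : Fin N) (w : List (Fin N))
    (h : u.length + 2 + w.length = k) :
    EE φ (k + 2) (o :: (dl (u ++ p :: q :: w) ++ [o']))
      + EE φ (k + 2) (o :: (dl (u ++ q :: p :: w) ++ [o'])) = 0 := by
  have h3 := H.mids (o :: dl u) (dl w ++ [o']) (by simp) (by simp; omega) p q
  simpa using h3

lemma revc (H : Cx φ k ε) {c : List (Fin N)} (hc : c.length = k) (o : Op K N) :
    ε • EE φ (k + 2) (o :: id :: dl c.reverse) = - EE φ (k + 2) (o :: id :: dl c) := by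
  have := sgn_rev c (fun l => EE φ (k + 2) (o :: id :: dl l)) (by rw [hc]; exact H.altW o)
  rw [this, smul_smul, hc, H.eps]; simp

lemma c1 (H : Cx φ k ε) (i j : Fin N) (c : List (Fin N)) (hc : c.length = k) :
    (EE φ (k + 2) (dl (i :: j :: c)) + EE φ (k + 2) (dl (j :: i :: c)))
      + (EE φ (k + 2) (dl (c ++ [i, j])) + EE φ (k + 2) (dl (c ++ [j, i]))) = 0 := by
  rw [H.rev (c ++ [i, j]) (by simp [hc]), H.rev (c ++ [j, i]) (by simp [hc])]
  have h1 := H.left (dl c) i j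
  have h2 := H.left (dl c.reverse) i j
  have h3 := H.revc hc (fun F => pderiv i (pderiv j F))
  simp only [List.reverse_append, List.reverse_cons, List.reverse_nil, List.nil_append,
    List.cons_append, dl_cons] at *
  rw [eq_neg_of_add_eq_zero_left h1, ← smul_add, add_comm (EE φ (k + 2) (_ :: _ :: dl c.reverse)),
    eq_neg_of_add_eq_zero_left h2, smul_neg, h3]
  simp

lemma c1s (H : Cx φ k ε) (i : Fin N) (c : List (Fin N)) (hc : c.length = k) :
    EE φ (k + 2) (dl (i :: i :: c)) + EE φ (k + 2) (dl (c ++ [i, i])) = 0 := by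
  rw [H.rev (c ++ [i, i]) (by simp [hc])]
  have h1 := H.left2 (dl c) i
  have h2 := H.left2 (dl c.reverse) i
  have h3 := H.revc hc (has2 i)
  simp only [List.reverse_append, List.reverse_cons, List.reverse_nil, List.nil_append,
    List.cons_append, dl_cons] at *
  rw [eq_neg_of_add_eq_zero_left h1, eq_neg_of_add_eq_zero_left h2, smul_neg, h3]
  simp

lemma c2 (H : Cx φ k ε) (i j : Fin N) (c : List (Fin N)) (hc : c.length = k) :
    EE φ (k + 2) (dl (j :: c ++ [i])) + EE φ (k + 2) (dl (i :: c ++ [j])) = 0 := by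
  rw [H.rev (j :: c ++ [i]) (by simp [hc])]
  have := sgn_rev c (fun l => EE φ (k + 2) (⇑(pderiv i) :: (dl l ++ [⇑(pderiv j)])))
    (by rw [hc]; exact H.altM _ _)
  simp only [List.reverse_append, List.reverse_cons, List.reverse_nil, List.nil_append,
    List.cons_append, dl_cons, dl_append, dl_nil] at *
  rw [this, smul_smul, hc, H.eps]; simp

lemma c2s (H : Cx φ k ε) (i : Fin N) (c : List (Fin N)) (hc : c.length = k) :
    EE φ (k + 2) (dl (i :: c ++ [i])) = 0 := by
  by_cases h2 : (2 : MvPolynomial (Fin N) K) = 0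
  swap
  · have := H.c2 i i c hc
    rw [← two_mul] at this
    exact (mul_eq_zero.1 this).resolve_left h2
  have neg : ∀ x : MvPolynomial (Fin N) K, -x = x := fun x => by
    rw [neg_eq_iff_add_eq_zero, ← two_mul, h2, zero_mul]
  have eqo : ∀ x y : MvPolynomial (Fin N) K, x + y = 0 → x = y := fun x y h => by
    rw [eq_neg_of_add_eq_zero_left h, neg]
  have sg : ∀ (n : ℕ) (x : MvPolynomial (Fin N) K), (-1 : ℤ) ^ n • x = x := fun n x => by
    rcases neg_one_pow_eq_or ℤ n with h | h <;> rw [h] <;> simp [neg]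
  rcases c with _ | ⟨e, c⟩
  · have := H.hk; simp at hc; omega
  simp only [List.length_cons] at hc
  have a1 := H.left (dl c ++ [⇑(pderiv i)]) i e
  have a2 := sgn_move c (fun l => EE φ (k + 2) (⇑(pderiv e) :: (dl l ++ [⇑(pderiv i)]))) i
    (by rw [hc]; exact H.altM _ _)
  have a3 := sgn_move c (fun l => EE φ (k + 2) ((fun F => pderiv i (pderiv e F)) :: id :: dl l)) i
    (by rw [hc]; exact H.altW _)
  have a4 := H.pushall (i :: c) [fun F => pderiv i (pderiv e F)] (by simp; omega)
  have a5 := eqo _ _ (H.left3 (dl c ++ [id]) i e)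
  have a6 := H.pushall (e :: c) [has2 i] (by simp; omega)
  have a7 := eqo _ _ (H.left2 (dl (e :: c)) i)
  have a8 := H.c1s i (e :: c) (by simp [hc])
  simp only [sg, dl_cons, dl_append, dl_nil, List.cons_append, List.nil_append,
    List.append_assoc] at *
  rw [eqo _ _ ((add_assoc _ _ _).symm.trans a1), ← a2, a3, a4, a5, ← a6, ← a7, add_comm]
  exact a8

end Cx

end PartB

section PartC

variable {K : Type*} [Field K] {N : ℕ} {b : ℕ → ℕ}

noncomputable def DD (φ : ∀ r : ℕ, PM K N (b r) (b (r + 1))) (m : ℕ) (l : List (Fin N)) :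
    MvPolynomial (Fin N) K :=
  ∑ k ∈ Finset.range m, EE φ m (dl (l.rotate (2 * (k + 1))))

lemma rot_ge {X : Type*} (i j : X) (c : List X) (t : ℕ) (ht : t < c.length) :
    (i :: j :: c).rotate (t + 2) = c.drop t ++ i :: j :: c.take t := by
  rw [List.rotate_eq_drop_append_take (by simp; omega)]
  simp

lemma rot_one {X : Type*} (i j : X) (c : List X) :
    (i :: j :: c).rotate 1 = j :: c ++ [i] := by
  simp

lemma rot_general {A : Type*} [AddCommGroup A] {k : ℕ} (hk : 1 ≤ k) (G : ℕ → A) (T : A)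
    (hper : ∀ t, G (t % (k + 2)) = G t)
    (h0 : G 0 = T) (h1 : G 1 = 0) (h2 : G 2 = - T) (h3 : ∀ t, 3 ≤ t → t < k + 2 → G t = 0) (e : ℕ) :
    ∑ s ∈ Finset.range (k + 2), G (2 * (s + 1) + e) = 0 := by
  set U : ℕ → A := fun t => if t % (k + 2) = 0 then T else 0 with hU
  have key : ∀ t, G (t + 2) = U (t + 2) - U t := by
    intro t
    rw [← hper (t + 2), hU]
    beta_reduce
    rw [Nat.add_mod t 2, Nat.mod_eq_of_lt (show 2 < k + 2 by omega)]
    have hr : t % (k + 2) < k + 2 := Nat.mod_lt _ (by omega)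
    generalize t % (k + 2) = r at hr
    by_cases c1 : r + 2 < k + 2
    · rw [Nat.mod_eq_of_lt c1, if_neg (by omega)]
      split_ifs with c2
      · subst c2; simpa using h2
      · rw [h3 _ (by omega) c1]; simp
    · obtain ⟨d, rfl⟩ : ∃ d, r = k + d := ⟨r - k, by omega⟩
      rw [show k + d + 2 = d + (k + 2) by ring, Nat.add_mod_right, Nat.mod_eq_of_lt (by omega)]
      rw [if_neg (show ¬ k + d = 0 by omega)]
      have : d = 0 ∨ d = 1 := by omega
      rcases this with rfl | rfl
      · simp [h0]
      · simp [h1]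
  have : ∀ s ∈ Finset.range (k + 2), G (2 * (s + 1) + e) = U (2 * (s + 1) + e) - U (2 * s + e) := by
    intro s _
    rw [show 2 * (s + 1) + e = (2 * s + e) + 2 by ring, key]
  rw [Finset.sum_congr rfl this, Finset.sum_range_sub (fun s => U (2 * s + e))]
  simp only [hU]
  rw [show 2 * (k + 2) + e = e + (k + 2) * 2 by ring, Nat.add_mul_mod_self_left]
  simp

lemma rot_start {X : Type*} (u w : List X) (i j : X) (t : ℕ) :
    (u ++ i :: j :: w).rotate t = (i :: j :: (w ++ u)).rotate (t + (w.length + 2)) := by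
  have : (i :: j :: (w ++ u)).rotate (w.length + 2) = u ++ i :: j :: w := by
    have := List.rotate_append_length_eq (i :: j :: w) u
    simpa using this
  rw [add_comm, ← List.rotate_rotate, this]

namespace Cx

variable {φ : ∀ r : ℕ, PM K N (b r) (b (r + 1))} {k : ℕ} {ε : ℤ}

lemma DD_swap (H : Cx φ k ε) (u w : List (Fin N)) (i j : Fin N) (h : u.length + 2 + w.length = k + 2) :
    DD φ (k + 2) (u ++ i :: j :: w) + DD φ (k + 2) (u ++ j :: i :: w) = 0 := by
  have hc : (w ++ u).length = k := by simp; omega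
  simp only [DD, ← Finset.sum_add_distrib, rot_start]
  generalize w ++ u = c at hc
  refine rot_general H.hk (fun t => EE φ (k + 2) (dl ((i :: j :: c).rotate t))
    + EE φ (k + 2) (dl ((j :: i :: c).rotate t))) _ ?_ rfl ?_ ?_ ?_ _
  · intro t
    have e1 := List.rotate_mod (i :: j :: c) t
    have e2 := List.rotate_mod (j :: i :: c) t
    simp only [List.length_cons, hc] at e1 e2
    simp only [e1, e2]
  · simp only [rot_one]; exact H.c2 i j c hc
  · have := H.hk
    rw [show 2 = 0 + 2 by rfl, rot_ge _ _ _ _ (by omega), rot_ge _ _ _ _ (by omega)]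
    simp only [List.rotate_zero, List.drop_zero, List.take_zero]
    rw [eq_neg_iff_add_eq_zero, add_comm]
    exact H.c1 i j c hc
  · intro t h3 h4
    obtain ⟨s, rfl⟩ : ∃ s, t = s + 2 := ⟨t - 2, by omega⟩
    rw [rot_ge _ _ _ _ (by omega), rot_ge _ _ _ _ (by omega)]
    simp only [dl_append, dl_cons]
    exact H.mids _ _ (by simp; omega) (by simp; omega) i j

lemma DD_same (H : Cx φ k ε) (u w : List (Fin N)) (i : Fin N) (h : u.length + 2 + w.length = k + 2) :
    DD φ (k + 2) (u ++ i :: i :: w) = 0 := by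
  have hc : (w ++ u).length = k := by simp; omega
  simp only [DD, rot_start]
  generalize w ++ u = c at hc
  refine rot_general H.hk (fun t => EE φ (k + 2) (dl ((i :: i :: c).rotate t))) _ ?_ rfl ?_ ?_ ?_ _
  · intro t
    have e1 := List.rotate_mod (i :: i :: c) t
    simp only [List.length_cons, hc] at e1
    simp only [e1]
  · simp only [rot_one]; exact H.c2s i c hc
  · have := H.hk
    rw [show 2 = 0 + 2 by rfl, rot_ge _ _ _ _ (by omega)]
    simp only [List.rotate_zero, List.drop_zero, List.take_zero]
    rw [eq_neg_iff_add_eq_zero, add_comm]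
    exact H.c1s i c hc
  · intro t h3 h4
    obtain ⟨s, rfl⟩ : ∃ s, t = s + 2 := ⟨t - 2, by omega⟩
    rw [rot_ge _ _ _ _ (by omega)]
    simp only [dl_append, dl_cons]
    exact H.mids2 _ _ (by simp; omega) (by simp; omega) i

end Cx

lemma DD_two_swap (φ : ∀ r : ℕ, PM K N (b r) (b (r + 1)))
    (rev : ∀ l : List (Fin N), l.length = 2 → EE φ 2 (dl l) = (-1 : ℤ) • EE φ 2 (dl l.reverse))
    (i j : Fin N) : DD φ 2 [i, j] + DD φ 2 [j, i] = 0 := by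
  have := rev [i, j] rfl
  have e : ∀ t (i j : Fin N), [i, j].rotate (2 * t) = [i, j] := fun t i j => by
    have := List.rotate_length_mul [i, j] t
    simpa using this
  simp only [DD, e, Finset.sum_const, Finset.card_range]
  rw [this]; simp

lemma DD_two_same (φ : ∀ r : ℕ, PM K N (b r) (b (r + 1)))
    (rev : ∀ l : List (Fin N), l.length = 2 → EE φ 2 (dl l) = (-1 : ℤ) • EE φ 2 (dl l.reverse))
    (i : Fin N) : DD φ 2 [i, i] = 0 := by
  have := DD_two_swap φ rev i i
  have h := rev [i, i] rfl
  have e : ∀ t (i j : Fin N), [i, j].rotate (2 * t) = [i, j] := fun t i j => by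
    have := List.rotate_length_mul [i, j] t
    simpa using this
  simp only [DD, e, Finset.sum_const, Finset.card_range]
  rw [two_smul]; nth_rw 1 [h]; simp

/-- functions on tuples -/
lemma ofFn_split {X : Type*} {m : ℕ} (f : Fin (m + 1) → X) (i : Fin m) :
    ∃ u w, u.length + 2 + w.length = m + 1 ∧
      List.ofFn f = u ++ f i.castSucc :: f i.succ :: w ∧
      List.ofFn (f ∘ Equiv.swap i.castSucc i.succ) = u ++ f i.succ :: f i.castSucc :: w := by
  refine ⟨(List.ofFn f).take i, (List.ofFn f).drop (i + 2), ?_, ?_, ?_⟩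
  · simp; omega
  · have h1 : (i : ℕ) < (List.ofFn f).length := by rw [List.length_ofFn]; omega
    have h2 : (i : ℕ) + 1 < (List.ofFn f).length := by simp
    conv_lhs => rw [← List.take_append_drop i (List.ofFn f), List.drop_eq_getElem_cons h1,
      List.drop_eq_getElem_cons h2]
    simp only [List.getElem_ofFn]
    rfl
  · apply List.ext_getElem
    · simp; omega
    intro n h1 h2
    simp only [List.length_ofFn] at h1
    have hi := i.2
    simp only [List.getElem_append, List.getElem_cons, List.getElem_ofFn, Function.comp,
      List.length_take, List.length_ofFn, List.getElem_take, List.getElem_drop]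
    have hmin : min (i : ℕ) (m + 1) = i := by omega
    simp only [hmin]
    by_cases c1 : n < i
    · rw [dif_pos c1, Equiv.swap_apply_of_ne_of_ne]
      · intro h; have := congrArg Fin.val h; simp at this; omega
      · intro h; have := congrArg Fin.val h; simp at this; omega
    rw [dif_neg c1]
    by_cases c2 : n = i
    · subst c2
      rw [dif_pos (by omega)]
      congr 1
      exact Equiv.swap_apply_left _ _
    rw [dif_neg (by omega)]
    by_cases c3 : n = i + 1
    · subst c3
      rw [dif_pos (by omega)]
      congr 1
      exact Equiv.swap_apply_right _ _
    rw [dif_neg (by omega), Equiv.swap_apply_of_ne_of_ne]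
    · congr 1; ext; simp; omega
    · intro h; have := congrArg Fin.val h; simp at this; omega
    · intro h; have := congrArg Fin.val h; simp at this; omega

lemma fn_perm {X A : Type*} [AddCommGroup A] {m : ℕ} (D : (Fin (m + 1) → X) → A)
    (h : ∀ f (i : Fin m), D (f ∘ Equiv.swap i.castSucc i.succ) = - D f)
    (π : Equiv.Perm (Fin (m + 1))) : ∀ f, D (f ∘ π) = ((Equiv.Perm.sign π : ℤˣ) : ℤ) • D f := by
  have hπ : π ∈ Submonoid.closure
      (Set.range fun i : Fin m ↦ Equiv.swap i.castSucc i.succ) := by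
    rw [Equiv.Perm.mclosure_swap_castSucc_succ]; trivial
  induction hπ using Submonoid.closure_induction with
  | mem x hx =>
    obtain ⟨i, rfl⟩ := hx
    intro f
    rw [h, Equiv.Perm.sign_swap (by simp [Fin.ext_iff])]; simp
  | one => intro f; simp
  | mul x y _ _ hx hy =>
    intro f
    have : f ∘ ⇑(x * y) = (f ∘ x) ∘ y := rfl
    rw [this, hy, hx, smul_smul]
    simp [mul_comm]

lemma fn_same {X A : Type*} [AddCommGroup A] {m : ℕ} (D : (Fin (m + 1) → X) → A)
    (h : ∀ f (i : Fin m), D (f ∘ Equiv.swap i.castSucc i.succ) = - D f)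
    (h' : ∀ f (i : Fin m), f i.castSucc = f i.succ → D f = 0)
    (f : Fin (m + 1) → X) (i j : Fin (m + 1)) (hij : i ≠ j) (hf : f i = f j) : D f = 0 := by
  obtain ⟨m, rfl⟩ : ∃ m', m = m' + 1 := by
    rcases m with _ | m
    · exact absurd (Fin.ext (by omega)) hij
    · exact ⟨m, rfl⟩
  -- a permutation taking 0 to i and 1 to j
  obtain ⟨π, h0, h1⟩ : ∃ π : Equiv.Perm (Fin (m + 1 + 1)), π 0 = i ∧ π 1 = j := by
    refine ⟨Equiv.swap (Equiv.swap 0 i 1) j * Equiv.swap 0 i, ?_, ?_⟩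
    · rw [Equiv.Perm.mul_apply, Equiv.swap_apply_left, Equiv.swap_apply_of_ne_of_ne _ hij]
      intro h
      have : Equiv.swap 0 i (0 : Fin (m+1+1)) = Equiv.swap 0 i 1 := by
        rw [← h, Equiv.swap_apply_left]
      have := (Equiv.swap 0 i).injective this
      simp at this
    · rw [Equiv.Perm.mul_apply, Equiv.swap_apply_left]
  have e := h' (f ∘ π) 0 (by
    simp only [Function.comp, Fin.castSucc_zero, Fin.succ_zero_eq_one, h0, h1, hf])
  rw [fn_perm D h] at e
  rcases Int.units_eq_one_or (Equiv.Perm.sign π) with hs | hs <;> simpa [hs] using e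

end PartC

section PartD

variable {K : Type*} [Field K] {N : ℕ} {b : ℕ → ℕ}

lemma brkVec_eq_pv (φ : ∀ r : ℕ, PM K N (b r) (b (r + 1))) (a : ℕ → Fin N) (r : ℕ) :
    brkVec φ a r = pv (fun r => (φ r).map (pderiv (a r))) r := by
  induction r with
  | zero => rfl
  | succ r ih => rw [brkVec, pv, ih]; rfl

lemma brk_eq_EE (φ : ∀ r : ℕ, PM K N (b r) (b (r + 1))) (m : ℕ) (a : ℕ → Fin N)
    (l : List (Fin N)) (h : ∀ r < m, l[r]? = some (a r)) :
    brk φ m a = EE φ m (dl l) := by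
  unfold brk EE
  rw [brkVec_eq_pv]
  refine Finset.sum_congr rfl fun j _ => congrFun (pv_congr _ _ m fun r hr => ?_) j
  simp [dl, List.getD_eq_getElem?_getD, h r hr]

lemma brk_congr (φ : ∀ r : ℕ, PM K N (b r) (b (r + 1))) (m : ℕ) (a a' : ℕ → Fin N)
    (h : ∀ r < m, a r = a' r) : brk φ m a = brk φ m a' := by
  unfold brk
  rw [brkVec_eq_pv, brkVec_eq_pv]
  refine Finset.sum_congr rfl fun j _ => congrFun (pv_congr _ _ m fun r hr => ?_) j
  rw [h r hr]

lemma brkVec_congr (φ : ∀ r : ℕ, PM K N (b r) (b (r + 1))) (m : ℕ) (a a' : ℕ → Fin N)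
    (h : ∀ r < m, a r = a' r) : brkVec φ a m = brkVec φ a' m := by
  rw [brkVec_eq_pv, brkVec_eq_pv]
  exact pv_congr _ _ m fun r hr => by rw [h r hr]

lemma chain (g : Matrix (Fin N) (Fin N) K) (i : Fin N) (F : MvPolynomial (Fin N) K) :
    pderiv i (aeval (fun j : Fin N => ∑ i : Fin N, C (g i j) * X i) F)
      = ∑ k, C (g i k) * aeval (fun j : Fin N => ∑ i : Fin N, C (g i j) * X i) (pderiv k F) := by
  induction F using MvPolynomial.induction_on with
  | C c => simp
  | add p q hp hq => simp only [map_add, hp, hq, mul_add, Finset.sum_add_distrib]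
  | mul_X p j hp =>
    simp only [map_mul, pderiv_mul, hp, map_add, aeval_X, mul_add, Finset.sum_add_distrib,
      Finset.sum_mul, map_sum, pderiv_C_mul, pderiv_X, Pi.single_apply]
    congr 1
    · simp only [mul_assoc]
    · simp [mul_comm]

lemma expandVec (g : Matrix (Fin N) (Fin N) K)
    (sub : MvPolynomial (Fin N) K →ₐ[K] MvPolynomial (Fin N) K)
    (hch : ∀ i F, pderiv i (sub F) = ∑ k, C (g i k) * sub (pderiv k F))
    (φ φ' : ∀ r : ℕ, PM K N (b r) (b (r + 1))) (hφ' : ∀ r, φ' r = (φ r).map (fun F => sub F))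
    (a : ℕ → Fin N) (k0 : Fin N) (r : ℕ) : ∀ q, brkVec φ' a r q
      = ∑ f : Fin r → Fin N, (∏ s : Fin r, C (g (a s) (f s)))
        * sub (brkVec φ (fun s => if h : s < r then f ⟨s, h⟩ else k0) r q) := by
  induction r with
  | zero => intro q; simp [brkVec]
  | succ r ih =>
    intro q
    rw [← (Fin.snocEquiv (fun _ => Fin N)).sum_comp, Fintype.sum_prod_type]
    have e1 : ∀ (k : Fin N) (f : Fin r → Fin N) (s : Fin r),
        (Fin.snocEquiv (fun _ => Fin N)) (k, f) s.castSucc = f s := by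
      intro k f s; simp [Fin.snocEquiv]
    have e2 : ∀ (k : Fin N) (f : Fin r → Fin N),
        (Fin.snocEquiv (fun _ => Fin N)) (k, f) (Fin.last r) = k := by
      intro k f; simp [Fin.snocEquiv]
    simp only [Fin.prod_univ_castSucc, e1, e2, Fin.val_castSucc, Fin.val_last]
    have e3 : ∀ (k : Fin N) (f : Fin r → Fin N),
        brkVec φ (fun s => if h : s < r + 1 then
          (Fin.snocEquiv (fun _ => Fin N)) (k, f) ⟨s, h⟩ else k0) (r + 1) q
        = ∑ p, brkVec φ (fun s => if h : s < r then f ⟨s, h⟩ else k0) r p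
            * pderiv k (φ r p q) := by
      intro k f
      rw [brkVec]
      simp only [Matrix.vecMul, dotProduct, Matrix.map_apply]
      refine Finset.sum_congr rfl fun p _ => ?_
      congr 1
      · refine congrFun (brkVec_congr φ r _ _ fun s hs => ?_) p
        rw [dif_pos (by omega), dif_pos hs]
        exact e1 k f ⟨s, hs⟩
      · beta_reduce
        rw [dif_pos (by omega)]
        congr 2
        exact e2 k f
    simp only [e3]
    rw [brkVec]
    simp only [Matrix.vecMul, dotProduct, ih, hφ', Matrix.map_apply, hch, map_sum, map_mul, Finset.sum_mul, Finset.mul_sum]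
    refine Finset.sum_comm.trans (Finset.sum_congr rfl fun k _ => ?_)
    refine Finset.sum_comm.trans (Finset.sum_congr rfl fun f _ => Finset.sum_congr rfl fun p _ => ?_)
    ring

lemma expand_brk (g : Matrix (Fin N) (Fin N) K)
    (sub : MvPolynomial (Fin N) K →ₐ[K] MvPolynomial (Fin N) K)
    (hch : ∀ i F, pderiv i (sub F) = ∑ k, C (g i k) * sub (pderiv k F))
    (φ φ' : ∀ r : ℕ, PM K N (b r) (b (r + 1))) (hφ' : ∀ r, φ' r = (φ r).map (fun F => sub F))
    (a : ℕ → Fin N) (k0 : Fin N) (m : ℕ) : brk φ' m a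
      = ∑ f : Fin m → Fin N, (∏ s : Fin m, C (g (a s) (f s)))
        * sub (EE φ m (dl (List.ofFn f))) := by
  have e : ∀ f : Fin m → Fin N, EE φ m (dl (List.ofFn f))
      = brk φ m (fun s => if h : s < m then f ⟨s, h⟩ else k0) := fun f => by
    refine (brk_eq_EE φ m _ _ fun r hr => ?_).symm
    simp [hr]
  simp only [e, brk, map_sum, Finset.mul_sum]
  rw [Finset.sum_comm]
  exact Finset.sum_congr rfl fun j _ => expandVec g sub hch φ φ' hφ' a k0 m j

/-- rotation of `Fin m` -/
def rotE (m : ℕ) [NeZero m] (t : ℕ) : Fin m ≃ Fin m := Equiv.addRight (Fin.ofNat m t)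

lemma rotE_val (m : ℕ) [NeZero m] (t : ℕ) (s : Fin m) : (rotE m t s : ℕ) = (s + t) % m := by
  simp [rotE, Fin.val_add]

lemma expand_dbrk (g : Matrix (Fin N) (Fin N) K)
    (sub : MvPolynomial (Fin N) K →ₐ[K] MvPolynomial (Fin N) K)
    (hch : ∀ i F, pderiv i (sub F) = ∑ k, C (g i k) * sub (pderiv k F))
    (φ φ' : ∀ r : ℕ, PM K N (b r) (b (r + 1))) (hφ' : ∀ r, φ' r = (φ r).map (fun F => sub F))
    (a : ℕ → Fin N) (k0 : Fin N) (m : ℕ) [NeZero m] : dbrk φ' m a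
      = ∑ f : Fin m → Fin N, (∏ s : Fin m, C (g (a s) (f s)))
        * sub (DD φ m (List.ofFn f)) := by
  simp only [dbrk, DD, map_sum, Finset.mul_sum]
  rw [Finset.sum_comm]
  refine Finset.sum_congr rfl fun k _ => ?_
  rw [expand_brk g sub hch φ φ' hφ' _ k0 m]
  rw [← (Equiv.arrowCongr (rotE m (2 * (k + 1))).symm (Equiv.refl (Fin N))).sum_comp]
  refine Finset.sum_congr rfl fun f _ => ?_
  have e : (Equiv.arrowCongr (rotE m (2 * (k + 1))).symm (Equiv.refl (Fin N))) f
      = fun s => f (rotE m (2 * (k + 1)) s) := by ext; simp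
  rw [e]
  congr 1
  · simp only [← rotE_val]
    exact (rotE m (2 * (k + 1))).prod_comp (fun s => C (g (a s) (f s)))
  · congr 3
    apply List.ext_getElem
    · simp
    intro n h1 h2
    rw [List.getElem_rotate]
    simp only [List.getElem_ofFn, List.length_ofFn]
    congr 1
    ext
    simp [rotE_val]

lemma dbrk_eq_DD (φ : ∀ r : ℕ, PM K N (b r) (b (r + 1))) (a : ℕ → Fin N) (m : ℕ)
    (f : Fin m → Fin N) (h : ∀ s : Fin m, a s = f s) : dbrk φ m a = DD φ m (List.ofFn f) := by
  unfold dbrk DD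
  refine Finset.sum_congr rfl fun k _ => brk_eq_EE φ m _ _ fun r hr => ?_
  rw [List.getElem?_eq_getElem (by simpa using hr), List.getElem_rotate]
  simp only [List.getElem_ofFn, List.length_ofFn]
  rw [← h]

lemma cauchy {R : Type*} [CommRing R] {m : ℕ} (D : (Fin (m + 1) → Fin (m + 2)) → R)
    (hp : ∀ (π : Equiv.Perm (Fin (m + 1))) f, D (f ∘ π) = ((Equiv.Perm.sign π : ℤˣ) : ℤ) • D f)
    (h0 : ∀ f i j, i ≠ j → f i = f j → D f = 0)
    (A : Matrix (Fin (m + 1)) (Fin (m + 2)) R) :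
    ∑ f, (∏ s, A s (f s)) * D f
      = ∑ k : Fin (m + 2), (A.submatrix id k.succAbove).det * D k.succAbove := by
  have e1 : ∀ k : Fin (m + 2), (A.submatrix id k.succAbove).det * D k.succAbove
      = ∑ π : Equiv.Perm (Fin (m + 1)), (∏ s, A s ((k.succAbove ∘ π) s)) * D (k.succAbove ∘ π) := by
    intro k
    rw [← Matrix.det_transpose, Matrix.det_apply', Finset.sum_mul]
    refine Finset.sum_congr rfl fun π _ => ?_
    rw [hp]
    simp only [Matrix.transpose_apply, Matrix.submatrix_apply, id, Function.comp, zsmul_eq_mul]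
    ring
  simp only [e1]
  rw [← Fintype.sum_prod_type']
  symm
  refine Finset.sum_of_injOn
    (fun x : Fin (m + 2) × Equiv.Perm (Fin (m + 1)) => (x.1.succAbove ∘ x.2)) ?_ ?_ ?_ ?_
  · rintro ⟨k, π⟩ _ ⟨k', π'⟩ _ h
    simp only at h
    have hk : k = k' := by
      by_contra hne
      obtain ⟨z, hz⟩ := Fin.exists_succAbove_eq hne
      have := congrFun h (π'.symm z)
      simp only [Function.comp, Equiv.apply_symm_apply, hz] at this
      exact Fin.succAbove_ne _ _ this
    subst hk
    congr 1
    ext1 s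
    exact Fin.succAbove_right_injective (congrFun h s)
  · intro _ _; simp
  · intro f _ hf
    by_cases hinj : Function.Injective f
    · exfalso
      apply hf
      have hns : ¬ Function.Surjective f := by
        intro hs
        have := Fintype.card_le_of_surjective f hs
        simp at this
      simp only [Function.Surjective, not_forall, not_exists] at hns
      obtain ⟨k, hk⟩ := hns
      choose π hπ using fun s => Fin.exists_succAbove_eq (hk s)
      have hπi : Function.Injective π := fun s t h => hinj (by rw [← hπ s, ← hπ t, h])
      refine ⟨(k, Equiv.ofBijective π (Finite.injective_iff_bijective.1 hπi)), by simp, ?_⟩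
      ext1 s
      simp [hπ]
    · simp only [Function.Injective, not_forall] at hinj
      obtain ⟨i, j, h1, h2⟩ := hinj
      rw [h0 f i j h2 h1, mul_zero]
  · intro _ _; rfl

lemma omitIdx_eq {m : ℕ} (j : Fin (m + 1)) (s : Fin m) : omitIdx j s = j.succAbove s := by
  unfold omitIdx
  have := s.2
  by_cases h : (s : ℕ) < j
  · rw [dif_pos h, Fin.succAbove_of_castSucc_lt _ _ (by simpa [Fin.lt_def] using h)]; rfl
  · rw [dif_neg h, dif_pos (by omega), Fin.succAbove_of_le_castSucc _ _
      (by simpa [Fin.le_def] using h)]; rfl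

theorem main_aux (k : ℕ) (b : ℕ → ℕ)
    (φ : ∀ r : ℕ, PM K (k + 3) (b r) (b (r + 1)))
    (hcomp : ∀ r, r + 2 ≤ k + 2 → φ r * φ (r + 1) = 0)
    (hdeg1 : ∀ p q, (φ 0 p q).IsHomogeneous 2)
    (hdegmid : ∀ r, 1 ≤ r → r + 2 ≤ k + 2 → ∀ p q, (φ r p q).IsHomogeneous 1)
    (ε : ℤ) (hε : ε = if (k + 2) % 4 = 0 ∨ (k + 2) % 4 = 1 then 1 else -1)
    (hrev : ∀ a : ℕ → Fin (k + 3),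
      brk φ (k + 2) a = ε • brk φ (k + 2) (fun r => a (k + 2 - 1 - r)))
    (g : Matrix (Fin (k + 3)) (Fin (k + 3)) K) (hg : IsUnit g.det)
    (sub : MvPolynomial (Fin (k + 3)) K →ₐ[K] MvPolynomial (Fin (k + 3)) K)
    (hsub : sub = aeval (fun j : Fin (k + 3) => ∑ i : Fin (k + 3), C (g i j) * X i))
    (φ' : ∀ r : ℕ, PM K (k + 3) (b r) (b (r + 1)))
    (hφ' : ∀ r, φ' r = (φ r).map (fun F => sub F)) (j : Fin (k + 3)) :
    OmegaForm φ' (k + 2) j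
        = C g.det * ∑ i : Fin (k + 3), C (g⁻¹ i j) * sub (OmegaForm φ (k + 2) i) := by
  have hch : ∀ i F, pderiv i (sub F) = ∑ k, C (g i k) * sub (pderiv k F) := by
    subst hsub; exact chain g
  have rev : ∀ l : List (Fin (k + 3)), l.length = k + 2 →
      EE φ (k + 2) (dl l) = ε • EE φ (k + 2) (dl l.reverse) := by
    intro l hl
    have := hrev (fun r => l.getD r 0)
    rw [brk_eq_EE φ _ _ l, brk_eq_EE φ _ _ l.reverse] at this
    · exact this
    · intro r hr
      rw [List.getElem?_reverse (by omega), List.getD_eq_getElem _ _ (by omega),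
        List.getElem?_eq_getElem (by omega)]
      simp only [hl]
    · intro r hr
      rw [List.getD_eq_getElem _ _ (by omega), List.getElem?_eq_getElem (by omega)]
  have heps : ε * (-1) ^ (k.choose 2) = -1 := by rw [hε]; exact eps_mul k
  have hDD : ∀ u w : List (Fin (k + 3)), ∀ i j, u.length + 2 + w.length = k + 2 →
      DD φ (k + 2) (u ++ i :: j :: w) + DD φ (k + 2) (u ++ j :: i :: w) = 0 ∧
      DD φ (k + 2) (u ++ i :: i :: w) = 0 := by
    intro u w i j h
    rcases Nat.eq_zero_or_pos k with hk | hk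
    · subst hk
      have hu : u = [] := List.length_eq_zero_iff.1 (by omega)
      have hw : w = [] := List.length_eq_zero_iff.1 (by omega)
      subst hu; subst hw
      have he : ε = -1 := by simpa using heps
      subst he
      exact ⟨DD_two_swap φ rev i j, DD_two_same φ rev i⟩
    · have H : Cx φ k ε := ⟨hk, hcomp, hdeg1, fun r h1 h2 => hdegmid r h1 (by omega), heps, rev⟩
      exact ⟨H.DD_swap u w i j h, H.DD_same u w i h⟩
  set D : (Fin (k + 1 + 1) → Fin (k + 3)) → MvPolynomial (Fin (k + 3)) K :=
    fun f => DD φ (k + 2) (List.ofFn f) with hD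
  have hs : ∀ f (i : Fin (k + 1)), D (f ∘ Equiv.swap i.castSucc i.succ) = - D f := by
    intro f i
    obtain ⟨u, w, h1, h2, h3⟩ := ofFn_split f i
    rw [eq_neg_iff_add_eq_zero]
    simp only [hD]
    rw [h2, h3]
    exact (hDD u w _ _ h1).1
  have hs' : ∀ f (i : Fin (k + 1)), f i.castSucc = f i.succ → D f = 0 := by
    intro f i h
    obtain ⟨u, w, h1, h2, h3⟩ := ofFn_split f i
    simp only [hD]
    rw [h2, h]
    exact (hDD u w (f i.succ) (f i.succ) h1).2
  have hper := fn_perm D hs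
  have hsame := fn_same D hs hs'
  have key := cauchy (m := k + 1) (fun f => sub (D f)) (fun π f => by rw [hper]; simp)
    (fun f i j h1 h2 => by rw [hsame f i j h1 h2, map_zero])
    (fun s t => C (g (j.succAbove s) t))
  have hO : ∀ i, OmegaForm φ (k + 2) i = (-1) ^ ((i : ℕ) + 1) * D i.succAbove := by
    intro i
    rw [OmegaForm, dbrk_eq_DD φ (omitIdx i) (k + 2) i.succAbove (fun s => omitIdx_eq i s)]
  rw [OmegaForm, expand_dbrk g sub hch φ φ' hφ' _ 0 (k + 2)]
  simp only [omitIdx_eq]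
  refine (congrArg _ key).trans ?_
  rw [Finset.mul_sum, Finset.mul_sum]
  refine Finset.sum_congr rfl fun i _ => ?_
  have hadj : g.det * g⁻¹ i j = (-1) ^ ((j : ℕ) + i) *
      (g.submatrix j.succAbove i.succAbove).det := by
    rw [← Matrix.adjugate_fin_succ_eq_det_submatrix, Matrix.inv_def]
    rw [Matrix.smul_apply, smul_eq_mul, ← mul_assoc, Ring.mul_inverse_cancel _ hg, one_mul]
  have hdet : (Matrix.submatrix (fun s t => C (g (j.succAbove s) t) :
      Matrix (Fin (k + 2)) (Fin (k + 3)) (MvPolynomial (Fin (k + 3)) K)) id i.succAbove).det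
      = C (g.submatrix j.succAbove i.succAbove).det := by
    rw [RingHom.map_det]; rfl
  rw [hdet, hO, ← mul_assoc (C g.det), ← C_mul, hadj]
  simp only [map_mul, map_pow, map_neg, map_one]
  have : ((-1 : MvPolynomial (Fin (k + 3)) K) ^ (i : ℕ)) * (-1) ^ (i : ℕ) = 1 := by
    rw [← mul_pow]; simp
  rw [pow_add _ (j : ℕ) i, pow_succ, pow_succ]
  linear_combination (-1 : MvPolynomial (Fin (k + 3)) K) ^ (j : ℕ) *
    C (g.submatrix j.succAbove i.succAbove).det * sub (D i.succAbove) * this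

end PartD

/-- covariance of the forms `Ω_j` under a change of coordinates
`x'_j = Σ_i g_{ij} x_i`: if `φ'_r(x) = φ_r(x')` and `Ω'_j` are the forms built from the
`φ'_r`, then `Ω'_j(x) = det(g)·Σ_k (g⁻¹)_{kj}·Ω_k(x')`. -/
theorem stmt10 (K : Type*) [Field K] (n : ℕ) (hn : 4 ≤ n) (m : ℕ) (hm : m = n - 2)
    (b : ℕ → ℕ) (hbpos : ∀ r, r ≤ m → 0 < b r) (hb0 : b 0 = 1) (hbm : b m = 1)
    (φ : ∀ r : ℕ, Matrix (Fin (b r)) (Fin (b (r + 1))) (MvPolynomial (Fin (n - 1)) K))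
    (hcomp : ∀ r, r + 2 ≤ m → φ r * φ (r + 1) = 0)
    (hdeg1 : ∀ p q, (φ 0 p q).IsHomogeneous 2)
    (hdegm : ∀ p q, (φ (m - 1) p q).IsHomogeneous 2)
    (hdegmid : ∀ r, 1 ≤ r → r + 2 ≤ m → ∀ p q, (φ r p q).IsHomogeneous 1)
    (ε : ℤ) (hε : ε = if m % 4 = 0 ∨ m % 4 = 1 then 1 else -1)
    (hrev : ∀ a : ℕ → Fin (n - 1), brk φ m a = ε • brk φ m (fun r => a (m - 1 - r)))
    (g : Matrix (Fin (n - 1)) (Fin (n - 1)) K) (hg : IsUnit g.det)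
    -- the substitution `F(x) ↦ F(x'_1, …, x'_{n−1})` with `x'_j = Σ_i g_{ij} x_i`
    (sub : MvPolynomial (Fin (n - 1)) K →ₐ[K] MvPolynomial (Fin (n - 1)) K)
    (hsub : sub = aeval (fun j : Fin (n - 1) =>
      ∑ i : Fin (n - 1), C (g i j) * X i))
    (φ' : ∀ r : ℕ, Matrix (Fin (b r)) (Fin (b (r + 1))) (MvPolynomial (Fin (n - 1)) K))
    (hφ' : ∀ r, φ' r = (φ r).map (fun F => sub F)) :
    ∀ j : Fin (n - 1),
      OmegaForm φ' m j
        = C g.det * ∑ k : Fin (n - 1), C (g⁻¹ k j) * sub (OmegaForm φ m k) := by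

  obtain ⟨k, rfl⟩ : ∃ k, n = k + 4 := ⟨n - 4, by omega⟩
  obtain rfl : m = k + 2 := by omega
  intro j
  exact main_aux k b φ hcomp hdeg1 hdegmid ε hε hrev g hg sub hsub φ' hφ' j
end

section
/- With the brace setup below (n ≥ 5), for every permutation τ ∈ S_{n−4} and all indices i, j, k, ℓ, a_1, …, a_{n−4} ∈ {1,…,n−1} we have {i, j, a_{τ(1)}, …, a_{τ(n−4)}, k, ℓ} = sign(τ) · {i, j, a_1, …, a_{n−4}, k, ℓ}. -/
open MvPolynomial

/-- The row vector `P(a_1,a_2)·(∂φ_2/∂x_{a_3})⋯(∂φ_{r+1}/∂x_{a_{r+2}})` (0-based: the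
sequence `c` is indexed from 0, `φ r` is the paper's `φ_{r+1}`). -/
noncomputable def braceVec {K : Type*} [Field K] {N : ℕ} {b : ℕ → ℕ}
    (φ : ∀ r : ℕ, Matrix (Fin (b r)) (Fin (b (r + 1))) (MvPolynomial (Fin N) K))
    (P : Fin N → Fin N → Fin (b 1) → K)
    (c : ℕ → Fin N) : ∀ r : ℕ, Fin (b (r + 1)) → MvPolynomial (Fin N) K
  | 0 => fun q => C (P (c 0) (c 1) q)
  | (r + 1) => Matrix.vecMul (braceVec φ P c r)
      (fun p q => pderiv (c (r + 2)) (φ (r + 1) p q))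

/-- The brace symbol `{a_1 a_2 ⋯ a_n} = P(a_1,a_2)·(∂φ_2/∂x_{a_3})⋯(∂φ_{m−1}/∂x_{a_{n−2}})
·Q(a_{n−1},a_n)` (a scalar, realized as a constant polynomial). Here `nn` is the paper's
`n`, `m = nn − 2`, and `h` records `m − 1 = m − 2 + 1`. -/
noncomputable def braceFn {K : Type*} [Field K] {N : ℕ} {b : ℕ → ℕ}
    (φ : ∀ r : ℕ, Matrix (Fin (b r)) (Fin (b (r + 1))) (MvPolynomial (Fin N) K))
    (P : Fin N → Fin N → Fin (b 1) → K)
    (m : ℕ) (Q : Fin N → Fin N → Fin (b (m - 1)) → K) (h : m - 1 = m - 2 + 1)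
    (nn : ℕ) (c : ℕ → Fin N) : MvPolynomial (Fin N) K :=
  ∑ p : Fin (b (m - 1)),
    braceVec φ P c (m - 2) (Fin.cast (congrArg b h) p) * C (Q (c (nn - 2)) (c (nn - 1)) p)

theorem pd2_zero {K : Type*} [Field K] {N : ℕ} (f : MvPolynomial (Fin N) K)
    (hf : f.IsHomogeneous 1) (i j : Fin N) : pderiv i (pderiv j f) = 0 := by
  have h := hf.pderiv (i := j)
  rw [Nat.sub_self, ← totalDegree_zero_iff_isHomogeneous, totalDegree_eq_zero_iff_eq_C] at h
  rw [h, pderiv_C]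

theorem anti_prod {K : Type*} [Field K] {N a b c : ℕ}
    (A : Matrix (Fin a) (Fin b) (MvPolynomial (Fin N) K))
    (B : Matrix (Fin b) (Fin c) (MvPolynomial (Fin N) K))
    (hA : ∀ p q, (A p q).IsHomogeneous 1) (hB : ∀ p q, (B p q).IsHomogeneous 1)
    (h : A * B = 0) (i j : Fin N) :
    (Matrix.of fun p q => pderiv i (A p q)) * (Matrix.of fun p q => pderiv j (B p q)) =
    - ((Matrix.of fun p q => pderiv j (A p q)) * (Matrix.of fun p q => pderiv i (B p q))) := by
  rw [eq_neg_iff_add_eq_zero]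
  ext1 p q
  have h1 := congrArg (fun x => pderiv i (pderiv j x)) (congrFun (congrFun h p) q)
  simp only [Matrix.mul_apply, Matrix.zero_apply, map_sum, map_zero, Derivation.leibniz,
    smul_eq_mul, map_add, pd2_zero _ (hA _ _), pd2_zero _ (hB _ _)] at h1
  simp only [Matrix.add_apply, Matrix.mul_apply, Matrix.of_apply, Matrix.zero_apply]
  rw [← Finset.sum_add_distrib, ← h1]
  refine Finset.sum_congr rfl fun x _ => ?_
  ring

theorem braceVec_congr {K : Type*} [Field K] {N : ℕ} {b : ℕ → ℕ}
    (φ : ∀ r : ℕ, Matrix (Fin (b r)) (Fin (b (r + 1))) (MvPolynomial (Fin N) K))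
    (P : Fin N → Fin N → Fin (b 1) → K) (f g : ℕ → Fin N) (r : ℕ)
    (h : ∀ s, s ≤ r + 1 → g s = f s) : braceVec φ P g r = braceVec φ P f r := by
  induction r with
  | zero => simp [braceVec, h 0, h 1]
  | succ r ih =>
    simp only [braceVec]
    rw [ih fun s hs => h s (by omega), h (r + 2) (by omega)]

theorem braceVec_swap {K : Type*} [Field K] {N : ℕ} {b : ℕ → ℕ}
    (φ : ∀ r : ℕ, Matrix (Fin (b r)) (Fin (b (r + 1))) (MvPolynomial (Fin N) K))
    (P : Fin N → Fin N → Fin (b 1) → K) (f g : ℕ → Fin N) (t : ℕ)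
    (hA : ∀ p q, (φ (t + 1) p q).IsHomogeneous 1)
    (hB : ∀ p q, (φ (t + 2) p q).IsHomogeneous 1)
    (hAB : φ (t + 1) * φ (t + 2) = 0)
    (h1 : g (t + 2) = f (t + 3)) (h2 : g (t + 3) = f (t + 2))
    (h3 : ∀ s, s ≠ t + 2 → s ≠ t + 3 → g s = f s) (r : ℕ) :
    braceVec φ P g (t + 2 + r) = - braceVec φ P f (t + 2 + r) := by
  induction r with
  | zero =>
    have e := anti_prod _ _ hA hB hAB (f (t + 3)) (f (t + 2))
    have e2 := congrArg (Matrix.vecMul (braceVec φ P f t)) e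
    rw [Matrix.vecMul_neg, ← Matrix.vecMul_vecMul, ← Matrix.vecMul_vecMul] at e2
    simp only [Nat.add_zero, braceVec]
    rw [braceVec_congr φ P f g t fun s hs => h3 s (by omega) (by omega), h1, h2]
    exact e2
  | succ r ih =>
    rw [← Nat.add_assoc]
    simp only [braceVec]
    rw [ih, h3 (t + 2 + r + 2) (by omega) (by omega)]
    exact Matrix.neg_vecMul _ _

theorem braceFn_swap {K : Type*} [Field K] {N : ℕ} {b : ℕ → ℕ}
    (φ : ∀ r : ℕ, Matrix (Fin (b r)) (Fin (b (r + 1))) (MvPolynomial (Fin N) K))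
    (P : Fin N → Fin N → Fin (b 1) → K) (f g : ℕ → Fin N) (t m n : ℕ)
    (hm : m = n - 2) (ht : t + 4 ≤ m)
    (Q : Fin N → Fin N → Fin (b (m - 1)) → K) (h : m - 1 = m - 2 + 1)
    (hA : ∀ p q, (φ (t + 1) p q).IsHomogeneous 1)
    (hB : ∀ p q, (φ (t + 2) p q).IsHomogeneous 1)
    (hAB : φ (t + 1) * φ (t + 2) = 0)
    (h1 : g (t + 2) = f (t + 3)) (h2 : g (t + 3) = f (t + 2))
    (h3 : ∀ s, s ≠ t + 2 → s ≠ t + 3 → g s = f s) :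
    braceFn φ P m Q h n g = - braceFn φ P m Q h n f := by
  have e : ∀ r, r = m - 2 → braceVec φ P g r = - braceVec φ P f r := by
    intro r hr
    obtain ⟨u, rfl⟩ : ∃ u, r = t + 2 + u := ⟨r - (t + 2), by omega⟩
    exact braceVec_swap φ P f g t hA hB hAB h1 h2 h3 u
  unfold braceFn
  rw [e _ rfl, h3 (n - 2) (by omega) (by omega), h3 (n - 1) (by omega) (by omega)]
  simp [Finset.sum_neg_distrib]

theorem braceFn_perm {K : Type*} [Field K] {N : ℕ} {b : ℕ → ℕ}
    (φ : ∀ r : ℕ, Matrix (Fin (b r)) (Fin (b (r + 1))) (MvPolynomial (Fin N) K))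
    (P : Fin N → Fin N → Fin (b 1) → K) (k m n : ℕ) (hn : n = k + 5)
    (hm : m = n - 2)
    (Q : Fin N → Fin N → Fin (b (m - 1)) → K) (h : m - 1 = m - 2 + 1)
    (hcomp : ∀ r, r + 2 ≤ m → φ r * φ (r + 1) = 0)
    (hdegmid : ∀ r, 1 ≤ r → r + 2 ≤ m → ∀ p q, (φ r p q).IsHomogeneous 1)
    (c : ℕ → Fin N) (τ : Equiv.Perm (Fin (k + 1))) :
    braceFn φ P m Q h n
        (fun r => if h : 2 ≤ r ∧ r - 2 < k + 1 then c (2 + (τ ⟨r - 2, h.2⟩ : ℕ)) else c r)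
      = (Equiv.Perm.sign τ : ℤ) • braceFn φ P m Q h n c := by
  have hτ : τ ∈ Submonoid.closure
      (Set.range fun i : Fin k ↦ Equiv.swap i.castSucc i.succ) := by
    rw [Equiv.Perm.mclosure_swap_castSucc_succ]; trivial
  induction hτ using Submonoid.closure_induction_right with
  | one =>
    simp only [Equiv.Perm.sign_one, Units.val_one, one_smul, Equiv.Perm.one_apply]
    congr 1
    funext r
    split_ifs with hr
    · congr 1; omega
    · rfl
  | mul_right σ hσ s hs ih =>
    obtain ⟨i, rfl⟩ := hs
    have hi := i.2
    rw [braceFn_swap φ P (fun r => if h : 2 ≤ r ∧ r - 2 < k + 1 then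
        c (2 + (σ ⟨r - 2, h.2⟩ : ℕ)) else c r) _ i m n hm (by omega) Q h
        (hdegmid _ (by omega) (by omega)) (hdegmid _ (by omega) (by omega))
        (hcomp _ (by omega)), ih]
    · rw [Equiv.Perm.sign_mul, Equiv.Perm.sign_swap (Fin.castSucc_lt_succ).ne]
      simp
    · have a1 : 2 ≤ (i : ℕ) + 2 ∧ (i : ℕ) + 2 - 2 < k + 1 := by omega
      have a2 : 2 ≤ (i : ℕ) + 3 ∧ (i : ℕ) + 3 - 2 < k + 1 := by omega
      simp only [dif_pos a1, dif_pos a2, Equiv.Perm.mul_apply]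
      rw [show (⟨(i : ℕ) + 2 - 2, a1.2⟩ : Fin (k + 1)) = i.castSucc from Fin.ext (by simp),
        show (⟨(i : ℕ) + 3 - 2, a2.2⟩ : Fin (k + 1)) = i.succ from Fin.ext (by simp),
        Equiv.swap_apply_left]
    · have a1 : 2 ≤ (i : ℕ) + 2 ∧ (i : ℕ) + 2 - 2 < k + 1 := by omega
      have a2 : 2 ≤ (i : ℕ) + 3 ∧ (i : ℕ) + 3 - 2 < k + 1 := by omega
      simp only [dif_pos a1, dif_pos a2, Equiv.Perm.mul_apply]
      rw [show (⟨(i : ℕ) + 2 - 2, a1.2⟩ : Fin (k + 1)) = i.castSucc from Fin.ext (by simp),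
        show (⟨(i : ℕ) + 3 - 2, a2.2⟩ : Fin (k + 1)) = i.succ from Fin.ext (by simp),
        Equiv.swap_apply_right]
    · intro r hr1 hr2
      by_cases hr : 2 ≤ r ∧ r - 2 < k + 1
      · simp only [dif_pos hr, Equiv.Perm.mul_apply]
        rw [Equiv.swap_apply_of_ne_of_ne]
        · intro e
          have := congrArg Fin.val e
          simp at this
          omega
        · intro e
          have := congrArg Fin.val e
          simp at this
          omega
      · simp only [dif_neg hr]

/-- In the brace setup (`n ≥ 5`), the brace symbol is alternating in its
middle `n − 4` entries: `{i, j, a_{τ(1)}, …, a_{τ(n−4)}, k, ℓ} = sign(τ)·{i, j, a_1, …,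
a_{n−4}, k, ℓ}` for every `τ ∈ S_{n−4}`. (0-based: the middle entries occupy positions
`2, …, n − 3` of the sequence `c`.) -/
theorem stmt11 (K : Type*) [Field K] (n : ℕ) (hn : 5 ≤ n) (m : ℕ) (hm : m = n - 2)
    (b : ℕ → ℕ) (hbpos : ∀ r, r ≤ m → 0 < b r) (hb0 : b 0 = 1) (hbm : b m = 1)
    (φ : ∀ r : ℕ, Matrix (Fin (b r)) (Fin (b (r + 1))) (MvPolynomial (Fin (n - 1)) K))
    (hcomp : ∀ r, r + 2 ≤ m → φ r * φ (r + 1) = 0)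
    (hdeg1 : ∀ p q, (φ 0 p q).IsHomogeneous 2)
    (hdegm : ∀ p q, (φ (m - 1) p q).IsHomogeneous 2)
    (hdegmid : ∀ r, 1 ≤ r → r + 2 ≤ m → ∀ p q, (φ r p q).IsHomogeneous 1)
    (P : Fin (n - 1) → Fin (n - 1) → Fin (b 1) → K)
    (Q : Fin (n - 1) → Fin (n - 1) → Fin (b (m - 1)) → K)
    (hPsymm : ∀ i j, P i j = P j i) (hQsymm : ∀ i j, Q i j = Q j i)
    (hP : ∀ (p : Fin (b 0)) (q : Fin (b 1)),
      φ 0 p q = ∑ i : Fin (n - 1), ∑ j : Fin (n - 1),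
        if i ≤ j then C (P i j q) * X i * X j else 0)
    (hQ : ∀ (p : Fin (b (m - 1))) (q : Fin (b (m - 1 + 1))),
      φ (m - 1) p q = ∑ i : Fin (n - 1), ∑ j : Fin (n - 1),
        if i ≤ j then C (Q i j p) * X i * X j else 0)
    (c : ℕ → Fin (n - 1)) (τ : Equiv.Perm (Fin (n - 4))) :
    braceFn φ P m Q (by omega) n
        (fun r => if h : 2 ≤ r ∧ r - 2 < n - 4 then c (2 + (τ ⟨r - 2, h.2⟩ : ℕ)) else c r)
      = (Equiv.Perm.sign τ : ℤ) • braceFn φ P m Q (by omega) n c := by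
  obtain ⟨k, rfl⟩ : ∃ k, n = k + 5 := ⟨n - 5, by omega⟩
  exact braceFn_perm φ P k m (k + 5) rfl hm Q (by omega) hcomp hdegmid c τ
end
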